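/- For every nonnegative integer j, all complex numbers b, d, and every complex q with q ≠ 0 such that the Gaussian binomial coefficients are defined (e.g. q not a root of unity, or q an indeterminate), the finite sum Σ_{n=0}^{j} [j choose n]_q (b/q;q)_{j−n} (−d/q)^n q^{n(n−1)/2} is symmetric in b and d; that is, it equals Σ_{n=0}^{j} [j choose n]_q (d/q;q)_{j−n} (−b/q)^n q^{n(n−1)/2}. -/

import Mathlib

/-!
Put `B = b/q`, `D = d/q`, `f_A(k) = (-A)^k q^{k(k-1)/2} / (q;q)_k` and `g(l) = 1 / (q;q)_l`.
The finite `q`-binomial theorem (`sum_eulerCoeff`) reads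
`(B;q)_m / (q;q)_m = ∑_{k+l=m} f_B(k) g(l)`.
Substituting it, the sum in question becomes `(q;q)_j ∑_{n+k+l=j} f_D(n) f_B(k) g(l)`, that is,
`(q;q)_j` times the coefficient of `X^j` in a product of three power series
(`sum_eq_coeff`). Exchanging `b` and `d` only exchanges two of the factors.
-/

/-- The finite q-Pochhammer symbol `(a; q)_n = ∏_{i=0}^{n-1} (1 - a q^i)`. -/
noncomputable def qPoch (a q : ℂ) (n : ℕ) : ℂ := ∏ i ∈ Finset.range n, (1 - a * q ^ i)

/-- The Gaussian (q-binomial) coefficient `[j choose n]_q = (q;q)_j / ((q;q)_n (q;q)_{j-n})`. -/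
noncomputable def qBinom (q : ℂ) (j n : ℕ) : ℂ := qPoch q q j / (qPoch q q n * qPoch q q (j - n))

/-- The coefficient `(-A)^k q^{k(k-1)/2} / (q;q)_k` of `x^k` in Euler's expansion of
`(Ax;q)_∞`. -/
noncomputable def eulerCoeff (A q : ℂ) (k : ℕ) : ℂ :=
  (-A) ^ k * q ^ (k * (k - 1) / 2) / qPoch q q k

lemma qPoch_succ (a q : ℂ) (n : ℕ) : qPoch a q (n + 1) = qPoch a q n * (1 - a * q ^ n) := by
  simp [qPoch, Finset.prod_range_succ]

lemma one_sub_mul_inv_qPoch {q : ℂ} {l : ℕ} (h : qPoch q q (l + 1) ≠ 0) :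
    (1 - q ^ (l + 1)) * (qPoch q q (l + 1))⁻¹ = (qPoch q q l)⁻¹ := by
  rw [qPoch_succ] at h ⊢
  have h1 := left_ne_zero_of_mul h
  have h2 := right_ne_zero_of_mul h
  rw [pow_succ' q l]
  field_simp

lemma one_sub_mul_eulerCoeff {A q : ℂ} {k : ℕ} (h : qPoch q q (k + 1) ≠ 0) :
    (1 - q ^ (k + 1)) * eulerCoeff A q (k + 1) = -A * q ^ k * eulerCoeff A q k := by
  have e : (k + 1) * (k + 1 - 1) / 2 = k * (k - 1) / 2 + k := by
    simpa [Finset.sum_range_succ, Finset.sum_range_id] using (Finset.sum_range_id (k + 1)).symm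
  rw [eulerCoeff, eulerCoeff, e, div_eq_mul_inv, div_eq_mul_inv, ← one_sub_mul_inv_qPoch h]
  ring

/-- The finite `q`-binomial theorem, divided by `(q;q)_m`. In the induction step the factor
`1 - q^{m+1}` is split over `k + l = m + 1` as `(1 - q^l) + q^l (1 - q^k)`; the two parts reduce
to the sum for `m`. -/
lemma sum_eulerCoeff (A q : ℂ) (m : ℕ) (h : ∀ n ≤ m, qPoch q q n ≠ 0) :
    ∑ p ∈ Finset.HasAntidiagonal.antidiagonal m, eulerCoeff A q p.1 * (qPoch q q p.2)⁻¹ =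
      qPoch A q m * (qPoch q q m)⁻¹ := by
  induction m with
  | zero => simp [eulerCoeff, qPoch]
  | succ m ih =>
    have ih := ih fun n hn => h n (by omega)
    have hm : (1 - q ^ (m + 1)) ≠ 0 := by
      have := h (m + 1) le_rfl
      rw [qPoch_succ] at this
      rw [pow_succ']
      exact right_ne_zero_of_mul this
    have split : (1 - q ^ (m + 1)) *
        ∑ p ∈ Finset.HasAntidiagonal.antidiagonal (m + 1), eulerCoeff A q p.1 * (qPoch q q p.2)⁻¹ =
        ∑ p ∈ Finset.HasAntidiagonal.antidiagonal (m + 1),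
          eulerCoeff A q p.1 * ((1 - q ^ p.2) * (qPoch q q p.2)⁻¹) +
        ∑ p ∈ Finset.HasAntidiagonal.antidiagonal (m + 1),
          (1 - q ^ p.1) * eulerCoeff A q p.1 * (q ^ p.2 * (qPoch q q p.2)⁻¹) := by
      rw [Finset.mul_sum, ← Finset.sum_add_distrib]
      refine Finset.sum_congr rfl fun p hp => ?_
      rw [← Finset.HasAntidiagonal.mem_antidiagonal.mp hp, pow_add]
      ring
    have first : ∑ p ∈ Finset.HasAntidiagonal.antidiagonal (m + 1),
          eulerCoeff A q p.1 * ((1 - q ^ p.2) * (qPoch q q p.2)⁻¹) =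
        ∑ p ∈ Finset.HasAntidiagonal.antidiagonal m, eulerCoeff A q p.1 * (qPoch q q p.2)⁻¹ := by
      rw [Finset.Nat.sum_antidiagonal_succ']
      simp only [pow_zero, sub_self, zero_mul, mul_zero, zero_add]
      refine Finset.sum_congr rfl fun p hp => ?_
      have := Finset.HasAntidiagonal.mem_antidiagonal.mp hp
      rw [one_sub_mul_inv_qPoch (h _ (by omega))]
    have second : ∑ p ∈ Finset.HasAntidiagonal.antidiagonal (m + 1),
          (1 - q ^ p.1) * eulerCoeff A q p.1 * (q ^ p.2 * (qPoch q q p.2)⁻¹) =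
        -A * q ^ m *
          ∑ p ∈ Finset.HasAntidiagonal.antidiagonal m, eulerCoeff A q p.1 * (qPoch q q p.2)⁻¹ := by
      rw [Finset.Nat.sum_antidiagonal_succ, Finset.mul_sum]
      simp only [pow_zero, sub_self, zero_mul, zero_add]
      refine Finset.sum_congr rfl fun p hp => ?_
      have := Finset.HasAntidiagonal.mem_antidiagonal.mp hp
      rw [one_sub_mul_eulerCoeff (h _ (by omega)), ← this, pow_add]
      ring
    apply mul_left_cancel₀ hm
    rw [split, first, second, ih, qPoch_succ A, ← one_sub_mul_inv_qPoch (h _ le_rfl)]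
    ring

/-- The sum in the theorem, with `B = b/q` and `D = d/q`, as a coefficient of a product of power
series in which `B` and `D` play the same role. -/
lemma sum_eq_coeff (j : ℕ) (B D q : ℂ) (hq : ∀ n ≤ j, qPoch q q n ≠ 0) :
    ∑ n ∈ Finset.range (j + 1),
        qBinom q j n * qPoch B q (j - n) * (-D) ^ n * q ^ (n * (n - 1) / 2) =
      qPoch q q j * PowerSeries.coeff j (PowerSeries.mk (eulerCoeff D q) *
        (PowerSeries.mk (eulerCoeff B q) * PowerSeries.mk fun l => (qPoch q q l)⁻¹)) := by
  rw [PowerSeries.coeff_mul, Finset.Nat.sum_antidiagonal_eq_sum_range_succ_mk, Finset.mul_sum]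
  refine Finset.sum_congr rfl fun n _ => ?_
  simp only [PowerSeries.coeff_mul, PowerSeries.coeff_mk]
  rw [sum_eulerCoeff B q (j - n) fun k hk => hq k (by omega), qBinom, eulerCoeff,
    div_eq_mul_inv, div_eq_mul_inv, mul_inv]
  ring

/-- Theorem 6.1: the finite sum `Σ_{n=0}^j [j,n]_q (b/q;q)_{j-n} (-d/q)^n q^{n(n-1)/2}`
is symmetric in `b` and `d`, whenever `q ≠ 0` and the Gaussian binomial coefficients are
defined (i.e. `(q;q)_n ≠ 0` for all `n ≤ j`). -/
theorem finite_sum_symmetric (j : ℕ) (b d q : ℂ) (hq0 : q ≠ 0)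
    (hq : ∀ n ≤ j, qPoch q q n ≠ 0) :
    ∑ n ∈ Finset.range (j + 1),
        qBinom q j n * qPoch (b / q) q (j - n) * (-d / q) ^ n * q ^ (n * (n - 1) / 2) =
      ∑ n ∈ Finset.range (j + 1),
        qBinom q j n * qPoch (d / q) q (j - n) * (-b / q) ^ n * q ^ (n * (n - 1) / 2) := by
  rw [neg_div, neg_div, sum_eq_coeff j _ _ q hq, sum_eq_coeff j _ _ q hq, mul_left_comm]
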